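/- Let (R,B) be an EIC problem with problem graph G in which every requested block is held by some node (so that at least one neighborhood partition exists). Let 𝒩 be the set of all neighborhood partitions. Then the minimum length of a task-based solution satisfies (T)_{(R,B)} = min over {Ñ_1,…,Ñ_n} ∈ 𝒩 of Σ_{i=1}^n rminrk_2(G|_{Ñ_i}, 𝒜_{(R^(i),B^(i))}), where (R^(i),B^(i)) is the EIC subproblem induced by Ñ_i. -/

import Mathlib

open Matrix BigOperators

namespace EIC

variable {n m : ℕ}

/-- The vertex set of the problem graph of the EIC problem `(R, B)`:
one vertex for each requirement pair `(u, a)` with `R u a = 1`. -/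
abbrev Vtx (R : Matrix (Fin n) (Fin m) (ZMod 2)) : Type :=
  {p : Fin n × Fin m // R p.1 p.2 = 1}

/-- `(R, B)` have disjoint supports: no position has both `B = 1` and `R = 1`. -/
def DisjointSupports (R B : Matrix (Fin n) (Fin m) (ZMod 2)) : Prop :=
  ∀ u a, ¬(B u a = 1 ∧ R u a = 1)

/-- The standard basis vector `e_a ∈ F_2^m`. -/
def e (m : ℕ) (a : Fin m) : Fin m → ZMod 2 := Pi.single a 1

/-- `β` (with rows indexed by `ι`) is a centralized linear broadcast solution to `(R, B)`:
for every requirement pair `(u, a)` there is `α` with `e_a = α · [β ; diag(B_u)]`. -/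
def IsCentralizedSolution (R B : Matrix (Fin n) (Fin m) (ZMod 2))
    {ι : Type} [Fintype ι] (β : Matrix ι (Fin m) (ZMod 2)) : Prop :=
  ∀ u a, R u a = 1 →
    ∃ α : ι ⊕ Fin m → ZMod 2,
      e m a = α ᵥ* Matrix.fromRows β (Matrix.diagonal (B u))

/-- `(C)_{(R,B)}`: the minimum length of a centralized linear broadcast solution. -/
noncomputable def Copt (R B : Matrix (Fin n) (Fin m) (ZMod 2)) : ℕ :=
  sInf {h | ∃ β : Matrix (Fin h) (Fin m) (ZMod 2), IsCentralizedSolution R B β}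

/-- The vertical concatenation of the matrices `β u`, `u ∈ [n]`. -/
def vconcat {h : Fin n → ℕ} (β : ∀ u : Fin n, Matrix (Fin (h u)) (Fin m) (ZMod 2)) :
    Matrix ((ℓ : Fin n) × Fin (h ℓ)) (Fin m) (ZMod 2) :=
  Matrix.of fun p => β p.1 p.2

/-- `β⁽¹⁾, …, β⁽ⁿ⁾` is a (decentralized) linear broadcast solution to `(R, B)`. -/
def IsBroadcastSolution (R B : Matrix (Fin n) (Fin m) (ZMod 2))
    {h : Fin n → ℕ} (β : ∀ u : Fin n, Matrix (Fin (h u)) (Fin m) (ZMod 2)) : Prop :=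
  (∀ u a, B u a = 0 → ∀ i, β u i a = 0) ∧
  ∀ u a, R u a = 1 →
    ∃ α : ((ℓ : Fin n) × Fin (h ℓ)) ⊕ Fin m → ZMod 2,
      e m a = α ᵥ* Matrix.fromRows (vconcat β) (Matrix.diagonal (B u))

/-- `(D)_{(R,B)}`: the minimum length of a decentralized linear broadcast solution. -/
noncomputable def Dopt (R B : Matrix (Fin n) (Fin m) (ZMod 2)) : ℕ :=
  sInf {s | ∃ (h : Fin n → ℕ) (β : ∀ u : Fin n, Matrix (Fin (h u)) (Fin m) (ZMod 2)),
    IsBroadcastSolution R B β ∧ ∑ u, h u = s}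

/-- A task-based solution: a linear broadcast solution where every requirement pair
`(u, a)` can be decoded from the broadcast of a single responsible sender `ℓ`. -/
def IsTaskBased (R B : Matrix (Fin n) (Fin m) (ZMod 2))
    {h : Fin n → ℕ} (β : ∀ u : Fin n, Matrix (Fin (h u)) (Fin m) (ZMod 2)) : Prop :=
  IsBroadcastSolution R B β ∧
  ∀ u a, R u a = 1 → ∃ ℓ : Fin n, ∃ α : Fin (h ℓ) ⊕ Fin m → ZMod 2,
    e m a = α ᵥ* Matrix.fromRows (β ℓ) (Matrix.diagonal (B u))

/-- `(T)_{(R,B)}`: the minimum length of a task-based solution. -/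
noncomputable def Topt (R B : Matrix (Fin n) (Fin m) (ZMod 2)) : ℕ :=
  sInf {s | ∃ (h : Fin n → ℕ) (β : ∀ u : Fin n, Matrix (Fin (h u)) (Fin m) (ZMod 2)),
    IsTaskBased R B β ∧ ∑ u, h u = s}

/-- The edge relation of the problem graph: for distinct requirement pairs `(u,a)`, `(w,b)`,
there is an edge from `v_{(u,a)}` to `v_{(w,b)}` iff `B u b = 1` or `a = b`. -/
def probEdge (R B : Matrix (Fin n) (Fin m) (ZMod 2)) (v w : Vtx R) : Prop :=
  v ≠ w ∧ (B v.1.1 w.1.2 = 1 ∨ v.1.2 = w.1.2)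

/-- A matrix `A` fits a directed graph with edge relation `E`. -/
def Fits {V : Type} (E : V → V → Prop) (A : Matrix V V (ZMod 2)) : Prop :=
  (∀ k, A k k = 1) ∧ ∀ k l, k ≠ l → ¬ E k l → A k l = 0

/-- `minrk₂`: the minimum `F₂`-rank of a matrix fitting the graph. -/
noncomputable def minrk {V : Type} [Fintype V] (E : V → V → Prop) : ℕ :=
  sInf {r | ∃ A : Matrix V V (ZMod 2), Fits E A ∧ A.rank = r}

/-- `rminrk₂`: the minimum `F₂`-rank of a matrix in `𝒜` fitting the graph. -/
noncomputable def rminrk {V : Type} [Fintype V] (E : V → V → Prop)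
    (𝒜 : Set (Matrix V V (ZMod 2))) : ℕ :=
  sInf {r | ∃ A ∈ 𝒜, Fits E A ∧ A.rank = r}

/-- The column repetition function `φ_{(R,B)}`: the column of `φ(A)` indexed by
`v_{(u,a)}` is the `a`-th column of `A`. -/
def phi (R : Matrix (Fin n) (Fin m) (ZMod 2))
    (A : Matrix (Vtx R) (Fin m) (ZMod 2)) : Matrix (Vtx R) (Vtx R) (ZMod 2) :=
  Matrix.of fun k v => A k v.1.2

/-- The sender neighborhood `N_u = {v_{(w,b)} ∈ V : B u b = 1}`. -/
def senderNbhd (R B : Matrix (Fin n) (Fin m) (ZMod 2)) (u : Fin n) : Set (Vtx R) :=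
  {v | B u v.1.2 = 1}

/-- A neighborhood partition `{Ñ_1, …, Ñ_n}`. -/
def IsNbhdPartition (R B : Matrix (Fin n) (Fin m) (ZMod 2))
    (N : Fin n → Set (Vtx R)) : Prop :=
  (∀ i, N i ⊆ senderNbhd R B i) ∧
  (∀ i j, i ≠ j → Disjoint (N i) (N j)) ∧
  (⋃ i, N i) = Set.univ

open Classical in
/-- `R^(i)`: the request matrix of the EIC subproblem induced by `Ñ_i`; it has ones
exactly at the requirement pairs whose vertex lies in `Ñ_i`. -/
noncomputable def Rsub (R : Matrix (Fin n) (Fin m) (ZMod 2))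
    (N : Fin n → Set (Vtx R)) (i : Fin n) : Matrix (Fin n) (Fin m) (ZMod 2) :=
  Matrix.of fun u a =>
    if hr : R u a = 1 then (if (⟨(u, a), hr⟩ : Vtx R) ∈ N i then 1 else 0) else 0

open Classical in
/-- `B^(i)`: the has-matrix of the EIC subproblem induced by `Ñ_i`; it agrees with `B`
on the columns of blocks requested in `Ñ_i` and is zero elsewhere. -/
noncomputable def Bsub (R B : Matrix (Fin n) (Fin m) (ZMod 2))
    (N : Fin n → Set (Vtx R)) (i : Fin n) : Matrix (Fin n) (Fin m) (ZMod 2) :=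
  Matrix.of fun u a => if ∃ v ∈ N i, v.1.2 = a then B u a else 0

/-- `Cl` is a clique for the edge relation `E`. -/
def IsClique {V : Type} (E : V → V → Prop) (Cl : Set V) : Prop :=
  ∀ k ∈ Cl, ∀ l ∈ Cl, k ≠ l → E k l

/-- `I` is an independent set for the edge relation `E` (no edge in either direction). -/
def IsIndep {V : Type} (E : V → V → Prop) (I : Set V) : Prop :=
  ∀ k ∈ I, ∀ l ∈ I, k ≠ l → ¬ E k l ∧ ¬ E l k

/-- `χ(Ḡ|_S)`: the minimum number of cliques of the induced subgraph `G|_S`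
needed to partition `S`. -/
noncomputable def cliqueCoverNum {V : Type} (E : V → V → Prop) (S : Set V) : ℕ :=
  sInf {t | ∃ Cl : Fin t → Set V, (∀ i, Cl i ⊆ S) ∧ (∀ i, IsClique E (Cl i)) ∧
    (∀ i j, i ≠ j → Disjoint (Cl i) (Cl j)) ∧ (⋃ i, Cl i) = S}

/-- `χ(G)`: the minimum number of independent sets of `G` needed to partition
its vertex set. -/
noncomputable def chromNum {V : Type} [Fintype V] (E : V → V → Prop) : ℕ :=
  sInf {t | ∃ I : Fin t → Set V, (∀ i, IsIndep E (I i)) ∧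
    (∀ i j, i ≠ j → Disjoint (I i) (I j)) ∧ (⋃ i, I i) = Set.univ}

/-- `ω(Ḡ|_S)`: the maximum size of an independent set of the induced subgraph `G|_S`. -/
noncomputable def indepNum {V : Type} (E : V → V → Prop) (S : Set V) : ℕ :=
  sSup {t | ∃ I ⊆ S, IsIndep E I ∧ I.ncard = t}

/-- The set of neighborhood-cliques: vertex sets of maximal cliques of the induced
subgraphs `G|_{N_i}`, over all senders `i`. -/
def nbhdCliques (R B : Matrix (Fin n) (Fin m) (ZMod 2)) : Set (Set (Vtx R)) :=
  {Cl | ∃ i : Fin n, Cl ⊆ senderNbhd R B i ∧ IsClique (probEdge R B) Cl ∧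
    ∀ Cl', Cl ⊆ Cl' → Cl' ⊆ senderNbhd R B i → IsClique (probEdge R B) Cl' → Cl' = Cl}

/-!
A node that requests `a` decodes it from one sender exactly when the row space of that sender's
broadcast contains a vector with entry `1` at `a` whose other nonzero entries sit at blocks the node
has. Choosing such a vector for every requirement pair served by sender `i` gives the rows of a
matrix `M` for which `φ(M)` fits the problem graph of the `i`-th subproblem, and `rank φ(M)` is at
most the number of rows broadcast by `i`. Assigning each pair to a sender that serves it is a
neighborhood partition, since a sender can only serve blocks it has.

Conversely, the columns of `M` at blocks that are not requested do not affect `φ(M)`, so they may be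
taken to be zero; then `rank M = rank φ(M)`, and sender `i`, who has every requested block of its
part, can broadcast a basis of the row space of `M`.
-/

lemma zmod_two_ne_one_iff {x : ZMod 2} : x ≠ 1 ↔ x = 0 := by
  decide +revert

section RowSpan

variable {ι ι' κ κ' S K : Type*} [CommSemiring S] [Field K]

lemma apply_eq_zero_of_mem_span_row {A : Matrix ι κ S} {x : κ → S} {b : κ}
    (hx : x ∈ Submodule.span S (Set.range A.row)) (hb : ∀ i, A i b = 0) : x b = 0 := by
  have hle : Submodule.span S (Set.range A.row) ≤ LinearMap.ker (LinearMap.proj b) :=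
    Submodule.span_le.2 <| Set.range_subset_iff.2 hb
  exact hle hx

lemma exists_vecMul_eq_iff_mem_span_row [Fintype ι] {A : Matrix ι κ S} {x : κ → S} :
    (∃ γ, γ ᵥ* A = x) ↔ x ∈ Submodule.span S (Set.range A.row) := by
  rw [← range_vecMulLinear]
  rfl

lemma exists_rank_rows_span_row_eq [Finite ι] [Fintype κ] (A : Matrix ι κ K) :
    ∃ Y : Matrix (Fin A.rank) κ K,
      Submodule.span K (Set.range Y.row) = Submodule.span K (Set.range A.row) := by
  let b := Module.finBasisOfFinrankEq K _ A.rank_eq_finrank_span_row.symm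
  refine ⟨Matrix.of fun j => b j, ?_⟩
  have hrange : Set.range (Matrix.of fun j => (b j : κ → K)).row =
      Submodule.subtype _ '' Set.range b := by
    rw [← Set.range_comp]
    rfl
  rw [hrange, Submodule.span_image, b.span_eq, Submodule.map_subtype_top]

lemma rank_le_card_of_row_mem_span_row [StrongRankCondition S] [Fintype ι'] [Fintype κ]
    {A : Matrix ι κ S} {Y : Matrix ι' κ S}
    (h : ∀ i, A i ∈ Submodule.span S (Set.range Y.row)) : A.rank ≤ Fintype.card ι' := by
  choose γ hγ using fun i => exists_vecMul_eq_iff_mem_span_row.2 (h i)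
  have hA : A = Matrix.of γ * Y := (funext hγ).symm
  rw [hA]
  exact (Matrix.rank_mul_le_left _ _).trans (Matrix.rank_le_card_width _)

lemma rank_submatrix_id_of_col_eq_zero [Fintype κ] [Fintype κ'] {A : Matrix ι κ S}
    {f : κ' → κ} (h : ∀ b ∉ Set.range f, A.col b = 0) : (A.submatrix id f).rank = A.rank := by
  have hspan : Submodule.span S (Set.range (A.submatrix id f).col) =
      Submodule.span S (Set.range A.col) := by
    refine (Submodule.span_mono <| Set.range_comp_subset_range f A.col).antisymm <|
      Submodule.span_le.2 <| Set.range_subset_iff.2 fun b => ?_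
    by_cases hb : b ∈ Set.range f
    · obtain ⟨c, rfl⟩ := hb
      exact Submodule.subset_span ⟨c, rfl⟩
    · exact h b hb ▸ zero_mem _
  rw [Matrix.rank_eq_finrank_span_cols, Matrix.rank_eq_finrank_span_cols, hspan]

end RowSpan

section Decoding

variable {ι ι' κ S K : Type*} [CommSemiring S] [Field K]

/-- Decodability of the block `a` from the broadcast `β` by a node that has the blocks `b` with
`d b ≠ 0`. It is encoded by the row space of `β` rather than by the coefficient vector `α`, so that
broadcasts with the same row space are interchangeable. -/
def Decodes (β : Matrix ι κ S) (d : κ → S) (a : κ) : Prop :=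
  ∃ x ∈ Submodule.span S (Set.range β.row), x a = 1 ∧ ∀ b, b ≠ a → d b = 0 → x b = 0

lemma Decodes.mono {β : Matrix ι κ S} {β' : Matrix ι' κ S} {d : κ → S} {a : κ}
    (h : Decodes β d a) (hle : Set.range β.row ⊆ Set.range β'.row) : Decodes β' d a :=
  let ⟨x, hx, hx'⟩ := h
  ⟨x, Submodule.span_mono hle hx, hx'⟩

lemma Decodes.exists_apply_ne_zero [Nontrivial S] {β : Matrix ι κ S} {d : κ → S} {a : κ}
    (h : Decodes β d a) : ∃ j, β j a ≠ 0 := by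
  obtain ⟨x, hx, hxa, -⟩ := h
  by_contra! hβ
  exact one_ne_zero (hxa.symm.trans (apply_eq_zero_of_mem_span_row hx hβ))

variable [Fintype ι] [Fintype κ] [DecidableEq κ]

lemma Decodes.exists_single_eq_vecMul {β : Matrix ι κ K} {d : κ → K} {a : κ}
    (h : Decodes β d a) :
    ∃ α : ι ⊕ κ → K, Pi.single a 1 = α ᵥ* Matrix.fromRows β (Matrix.diagonal d) := by
  obtain ⟨x, hx, hxa, hxd⟩ := h
  obtain ⟨γ, rfl⟩ := exists_vecMul_eq_iff_mem_span_row.2 hx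
  refine ⟨Sum.elim γ ((Pi.single a 1 - γ ᵥ* β) / d), funext fun b => ?_⟩
  rw [Matrix.sumElim_vecMul_fromRows, Pi.add_apply, Matrix.vecMul_diagonal, Pi.div_apply,
    div_mul_cancel_of_imp, Pi.sub_apply, add_sub_cancel]
  intro hb
  by_cases hba : b = a
  · simp [hba, hxa]
  · simp [hba, hxd b hba hb]

lemma decodes_of_single_eq_vecMul {β : Matrix ι κ S} {d : κ → S} {a : κ} {α : ι ⊕ κ → S}
    (ha : d a = 0) (h : Pi.single a 1 = α ᵥ* Matrix.fromRows β (Matrix.diagonal d)) :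
    Decodes β d a := by
  have hx (b : κ) (hb : d b = 0) : (α ∘ Sum.inl ᵥ* β) b = (Pi.single a 1 : κ → S) b := by
    rw [h, Matrix.vecMul_fromRows, Pi.add_apply, Matrix.vecMul_diagonal, hb, mul_zero, add_zero]
  refine ⟨_, exists_vecMul_eq_iff_mem_span_row.1 ⟨α ∘ Sum.inl, rfl⟩, ?_, fun b hba hb => ?_⟩
  · rw [hx a ha, Pi.single_eq_same]
  · rw [hx b hb, Pi.single_eq_of_ne hba]

end Decoding

variable {R B : Matrix (Fin n) (Fin m) (ZMod 2)} {N : Fin n → Set (Vtx R)} {i : Fin n}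

/-- The restricted min-rank `rminrk₂(G, 𝒜_{(R,B)})` of the EIC problem `(R, B)` with problem
graph `G`. -/
noncomputable def problemRminrk (R B : Matrix (Fin n) (Fin m) (ZMod 2)) : ℕ :=
  rminrk (probEdge R B) (Set.range (phi R))

lemma fits_phi_iff {M : Matrix (Vtx R) (Fin m) (ZMod 2)} :
    Fits (probEdge R B) (phi R M) ↔ (∀ v, M v v.1.2 = 1) ∧
      ∀ v w : Vtx R, w.1.2 ≠ v.1.2 → B v.1.1 w.1.2 = 0 → M v w.1.2 = 0 := by
  refine and_congr_right fun _ => forall₂_congr fun v w => ?_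
  have hnonedge : v ≠ w ∧ ¬probEdge R B v w ↔ w.1.2 ≠ v.1.2 ∧ B v.1.1 w.1.2 = 0 := by
    rw [← zmod_two_ne_one_iff, probEdge]
    grind
  rw [← and_imp, ← and_imp, hnonedge]
  rfl

lemma exists_fits_phi_rank_eq_problemRminrk (R B : Matrix (Fin n) (Fin m) (ZMod 2)) :
    ∃ M, Fits (probEdge R B) (phi R M) ∧ (phi R M).rank = problemRminrk R B := by
  have huncoded : Fits (probEdge R B) (phi R (Matrix.of fun v => Pi.single v.1.2 1)) :=
    fits_phi_iff.2 ⟨fun v => Pi.single_eq_same .., fun v w hwv _ => Pi.single_eq_of_ne hwv _⟩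
  have hne : {r | ∃ A ∈ Set.range (phi R), Fits (probEdge R B) A ∧ A.rank = r}.Nonempty :=
    ⟨_, _, ⟨_, rfl⟩, huncoded, rfl⟩
  obtain ⟨_, ⟨M, rfl⟩, hfits, hrank⟩ := Nat.sInf_mem hne
  exact ⟨M, hfits, hrank⟩

lemma exists_phi_eq_rank_eq_and_apply_eq_zero (M : Matrix (Vtx R) (Fin m) (ZMod 2)) :
    ∃ M', phi R M' = phi R M ∧ M'.rank = (phi R M).rank ∧
      ∀ b, (∀ w : Vtx R, w.1.2 ≠ b) → ∀ v, M' v b = 0 := by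
  classical
  let M' : Matrix (Vtx R) (Fin m) (ZMod 2) :=
    Matrix.of fun v b => if ∃ w : Vtx R, w.1.2 = b then M v b else 0
  have hzero (b : Fin m) (hb : ∀ w : Vtx R, w.1.2 ≠ b) (v : Vtx R) : M' v b = 0 :=
    if_neg (not_exists.2 hb)
  have hphi : phi R M' = phi R M := by
    ext v w
    exact if_pos ⟨w, rfl⟩
  refine ⟨M', hphi, ?_, hzero⟩
  rw [← hphi]
  refine (rank_submatrix_id_of_col_eq_zero fun b hb => funext (hzero b ?_)).symm
  exact fun w hw => hb ⟨w, hw⟩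

lemma exists_decodes_length_problemRminrk (R B : Matrix (Fin n) (Fin m) (ZMod 2)) :
    ∃ β : Matrix (Fin (problemRminrk R B)) (Fin m) (ZMod 2),
      (∀ b, (∀ w : Vtx R, w.1.2 ≠ b) → ∀ j, β j b = 0) ∧
      ∀ v : Vtx R, Decodes β (B v.1.1) v.1.2 := by
  obtain ⟨M₀, hfits, hrank⟩ := exists_fits_phi_rank_eq_problemRminrk R B
  obtain ⟨M, hphi, hrankM, hzero⟩ := exists_phi_eq_rank_eq_and_apply_eq_zero M₀
  rw [← hphi, fits_phi_iff] at hfits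
  rw [← hrank, ← hrankM]
  obtain ⟨β, hβ⟩ := exists_rank_rows_span_row_eq M
  have hβM (j) : β j ∈ Submodule.span (ZMod 2) (Set.range M.row) :=
    hβ ▸ Submodule.subset_span ⟨j, rfl⟩
  refine ⟨β, fun b hb j => apply_eq_zero_of_mem_span_row (hβM j) (hzero b hb), fun v =>
    ⟨M v, hβ ▸ Submodule.subset_span ⟨v, rfl⟩, hfits.1 v, fun b hbv hb => ?_⟩⟩
  by_cases hreq : ∃ w : Vtx R, w.1.2 = b
  · obtain ⟨w, rfl⟩ := hreq
    exact hfits.2 v w hbv hb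
  · exact hzero b (not_exists.1 hreq) v

lemma problemRminrk_le_of_decodes {k : ℕ} {β : Matrix (Fin k) (Fin m) (ZMod 2)}
    (h : ∀ v : Vtx R, Decodes β (B v.1.1) v.1.2) : problemRminrk R B ≤ k := by
  choose M hMβ hM1 hM0 using h
  have hfits : Fits (probEdge R B) (phi R (Matrix.of M)) :=
    fits_phi_iff.2 ⟨hM1, fun v w => hM0 v w.1.2⟩
  calc
    problemRminrk R B ≤ (phi R (Matrix.of M)).rank :=
      Nat.sInf_le ⟨_, ⟨_, rfl⟩, hfits, rfl⟩
    _ ≤ (Matrix.of M).rank := Matrix.rank_submatrix_le _ id fun w : Vtx R => w.1.2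
    _ ≤ Fintype.card (Fin k) := rank_le_card_of_row_mem_span_row hMβ
    _ = k := Fintype.card_fin k

lemma Rsub_apply_eq_one_iff {u : Fin n} {a : Fin m} :
    Rsub R N i u a = 1 ↔ ∃ hr : R u a = 1, (⟨(u, a), hr⟩ : Vtx R) ∈ N i := by
  rw [Rsub, Matrix.of_apply]
  split_ifs <;> simp [*]

lemma Bsub_apply_of_vtx (u : Fin n) (w : Vtx (Rsub R N i)) :
    Bsub R B N i u w.1.2 = B u w.1.2 := by
  obtain ⟨_, hw⟩ := Rsub_apply_eq_one_iff.1 w.2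
  exact if_pos ⟨_, hw, rfl⟩

lemma problemRminrk_Rsub_Bsub :
    problemRminrk (Rsub R N i) (Bsub R B N i) = problemRminrk (Rsub R N i) B := by
  have hedge : probEdge (Rsub R N i) (Bsub R B N i) = probEdge (Rsub R N i) B := by
    ext v w
    rw [probEdge, probEdge, Bsub_apply_of_vtx]
  rw [problemRminrk, problemRminrk, hedge]

lemma problemRminrk_Rsub_Bsub_le {k : ℕ} {β : Matrix (Fin k) (Fin m) (ZMod 2)}
    (h : ∀ v ∈ N i, Decodes β (B v.1.1) v.1.2) :
    problemRminrk (Rsub R N i) (Bsub R B N i) ≤ k := by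
  rw [problemRminrk_Rsub_Bsub]
  refine problemRminrk_le_of_decodes (β := β) fun v => ?_
  obtain ⟨_, hv⟩ := Rsub_apply_eq_one_iff.1 v.2
  exact h _ hv

lemma exists_decodes_length_problemRminrk_Rsub_Bsub (hN : N i ⊆ senderNbhd R B i) :
    ∃ β : Matrix (Fin (problemRminrk (Rsub R N i) (Bsub R B N i))) (Fin m) (ZMod 2),
      (∀ a, B i a = 0 → ∀ j, β j a = 0) ∧ ∀ v ∈ N i, Decodes β (B v.1.1) v.1.2 := by
  rw [problemRminrk_Rsub_Bsub]
  obtain ⟨β, hzero, hdec⟩ := exists_decodes_length_problemRminrk (Rsub R N i) B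
  refine ⟨β, fun a ha => hzero a ?_, fun v hv =>
    hdec ⟨v.1, Rsub_apply_eq_one_iff.2 ⟨v.2, hv⟩⟩⟩
  rintro w rfl
  obtain ⟨_, hw⟩ := Rsub_apply_eq_one_iff.1 w.2
  exact zero_ne_one (ha.symm.trans (hN hw))

lemma isTaskBased_of_decodes {h : Fin n → ℕ}
    {β : ∀ u : Fin n, Matrix (Fin (h u)) (Fin m) (ZMod 2)}
    (hzero : ∀ u a, B u a = 0 → ∀ j, β u j a = 0)
    (hdec : ∀ v : Vtx R, ∃ ℓ, Decodes (β ℓ) (B v.1.1) v.1.2) : IsTaskBased R B β := by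
  refine ⟨⟨hzero, fun u a hr => ?_⟩, fun u a hr => ?_⟩
  · obtain ⟨ℓ, hℓ⟩ := hdec ⟨(u, a), hr⟩
    have hrows : Set.range (β ℓ).row ⊆ Set.range (vconcat β).row :=
      Set.range_subset_iff.2 fun j => ⟨⟨ℓ, j⟩, rfl⟩
    exact (hℓ.mono hrows).exists_single_eq_vecMul
  · obtain ⟨ℓ, hℓ⟩ := hdec ⟨(u, a), hr⟩
    exact ⟨ℓ, hℓ.exists_single_eq_vecMul⟩

lemma IsTaskBased.exists_decodes {h : Fin n → ℕ}
    {β : ∀ u : Fin n, Matrix (Fin (h u)) (Fin m) (ZMod 2)} (hβ : IsTaskBased R B β)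
    (hdisj : DisjointSupports R B) (v : Vtx R) : ∃ ℓ, Decodes (β ℓ) (B v.1.1) v.1.2 := by
  have hB : B v.1.1 v.1.2 = 0 := zmod_two_ne_one_iff.1 fun hB => hdisj _ _ ⟨hB, v.2⟩
  obtain ⟨ℓ, α, hα⟩ := hβ.2 v.1.1 v.1.2 v.2
  exact ⟨ℓ, decodes_of_single_eq_vecMul hB hα⟩

lemma isNbhdPartition_fibers {L : Vtx R → Fin n} (hL : ∀ v, B (L v) v.1.2 = 1) :
    IsNbhdPartition R B fun i => L ⁻¹' {i} := by
  refine ⟨?_, fun i j hij => ?_, ?_⟩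
  · rintro _ v rfl
    exact hL v
  · exact (Set.disjoint_singleton.2 hij).preimage L
  · rw [← Set.preimage_iUnion, Set.iUnion_of_singleton, Set.preimage_univ]

lemma exists_isNbhdPartition (hheld : ∀ u a, R u a = 1 → ∃ w, B w a = 1) :
    ∃ N, IsNbhdPartition R B N := by
  choose L hL using fun v : Vtx R => hheld v.1.1 v.1.2 v.2
  exact ⟨_, isNbhdPartition_fibers hL⟩

lemma IsNbhdPartition.exists_isTaskBased (hN : IsNbhdPartition R B N) :
    ∃ (h : Fin n → ℕ) (β : ∀ u : Fin n, Matrix (Fin (h u)) (Fin m) (ZMod 2)),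
      IsTaskBased R B β ∧ ∑ u, h u = ∑ i, problemRminrk (Rsub R N i) (Bsub R B N i) := by
  choose β hzero hdec using fun i =>
    exists_decodes_length_problemRminrk_Rsub_Bsub (hN.1 i)
  refine ⟨_, β, isTaskBased_of_decodes hzero fun v => ?_, rfl⟩
  obtain ⟨i, hi⟩ := Set.iUnion_eq_univ_iff.1 hN.2.2 v
  exact ⟨i, hdec i v hi⟩

lemma IsTaskBased.exists_isNbhdPartition {h : Fin n → ℕ}
    {β : ∀ u : Fin n, Matrix (Fin (h u)) (Fin m) (ZMod 2)} (hβ : IsTaskBased R B β)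
    (hdisj : DisjointSupports R B) :
    ∃ N, IsNbhdPartition R B N ∧
      ∑ i, problemRminrk (Rsub R N i) (Bsub R B N i) ≤ ∑ u, h u := by
  choose L hL using hβ.exists_decodes hdisj
  have hheld (v : Vtx R) : B (L v) v.1.2 = 1 := by
    obtain ⟨j, hj⟩ := (hL v).exists_apply_ne_zero
    by_contra hB
    exact hj (hβ.1.1 _ _ (zmod_two_ne_one_iff.1 hB) j)
  refine ⟨_, isNbhdPartition_fibers hheld,
    Finset.sum_le_sum fun i _ => problemRminrk_Rsub_Bsub_le (β := β i) ?_⟩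
  rintro v rfl
  exact hL v

theorem taskbased_eq_min_partition_rminrk {n m : ℕ}
    (R B : Matrix (Fin n) (Fin m) (ZMod 2)) (hdisj : DisjointSupports R B)
    (hheld : ∀ u a, R u a = 1 → ∃ w, B w a = 1) :
    Topt R B = sInf {s | ∃ N : Fin n → Set (Vtx R), IsNbhdPartition R B N ∧
      s = ∑ i, rminrk (probEdge (Rsub R N i) (Bsub R B N i))
        (Set.range (phi (Rsub R N i)))} := by
  obtain ⟨N₀, hN₀⟩ := exists_isNbhdPartition hheld
  apply le_antisymm
  · refine le_csInf ⟨_, N₀, hN₀, rfl⟩ ?_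
    rintro _ ⟨N, hN, rfl⟩
    exact Nat.sInf_le hN.exists_isTaskBased
  · refine le_csInf ⟨_, hN₀.exists_isTaskBased⟩ ?_
    rintro _ ⟨h, β, hβ, rfl⟩
    obtain ⟨N, hN, hle⟩ := hβ.exists_isNbhdPartition hdisj
    exact le_trans (Nat.sInf_le ⟨N, hN, rfl⟩) hle

end EIC
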